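/- Assume additionally θ_L > β_H·θ_H. Then the optimal contract satisfies the low-type incentive compatibility constraint: U_W(θ_L, I_L*, p_L*) ≥ U_W(θ_L, I_H*, p_H*); moreover U_W(θ_L, I_L*, p_L*) − U_W(θ_L, I_H*, p_H*) = (θ_H − θ_L)·ln((I_H* − I_r1)/(I_L* − I_r1)) ≥ 0. -/

import Mathlib

open Real

noncomputable def UW (η2 η3 Ir1 Ir2 θ I p : ℝ) : ℝ :=
  θ * Real.log (η2 * (I - Ir1)) + η3 * (I - Ir2) - p

noncomputable def priceL (θL η2 η3 Ir1 Ir2 IL : ℝ) : ℝ :=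
  θL * Real.log (η2 * (IL - Ir1)) + η3 * (IL - Ir2)

noncomputable def priceH (θL θH η2 η3 Ir1 Ir2 IL IH : ℝ) : ℝ :=
  priceL θL η2 η3 Ir1 Ir2 IL + θH * Real.log ((IH - Ir1) / (IL - Ir1)) + η3 * (IH - IL)

noncomputable def fobj (θL θH βL βH η1 η2 η3 Ir1 Ir2 ΔC IL IH : ℝ) : ℝ :=
  βL * (priceL θL η2 η3 Ir1 Ir2 IL - η1 * IL)
    + βH * (priceH θL θH η2 η3 Ir1 Ir2 IL IH - η1 * IH) + ΔC

noncomputable def ILstar (θL θH βL βH η1 η3 Ir1 : ℝ) : ℝ :=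
  Ir1 + (θL - βH * θH) / (βL * (η1 - η3))

noncomputable def IHstar (θH η1 η3 Ir1 : ℝ) : ℝ :=
  Ir1 + θH / (η1 - η3)

noncomputable def UE (βL βH η1 ΔC pLo IL pHi IH : ℝ) : ℝ :=
  βL * (pLo - η1 * IL) + βH * (pHi - η1 * IH) + ΔC

/-!
The price difference is exactly what the high type gains by moving from `IL` to `IH`, so the
`η3` terms cancel and a teleoperator of type `θ` prefers the low contract to the high one by
`(θH - θ) * log ((IH - Ir1) / (IL - Ir1))`. This is nonnegative for every `θ ≤ θH` once
`Ir1 < IL ≤ IH`. At the optimal performances, `Ir1 < ILstar` amounts to `βH * θH < θL`, and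
since `βL + βH = 1`, `ILstar ≤ IHstar` amounts to `θL ≤ θH`.
-/

section Utility

variable {η2 Ir1 : ℝ} (η3 Ir2 : ℝ)

lemma UW_sub_UW {I J : ℝ} (θ p q : ℝ) (hη2 : η2 ≠ 0) (hI : I ≠ Ir1) (hJ : J ≠ Ir1) :
    UW η2 η3 Ir1 Ir2 θ I p - UW η2 η3 Ir1 Ir2 θ J q =
      (q - p) - (θ * log ((J - Ir1) / (I - Ir1)) + η3 * (J - I)) := by
  have hI' : I - Ir1 ≠ 0 := sub_ne_zero.2 hI
  have hJ' : J - Ir1 ≠ 0 := sub_ne_zero.2 hJ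
  unfold UW
  rw [log_mul hη2 hI', log_mul hη2 hJ', log_div hJ' hI']
  ring

lemma UW_priceL_sub_UW_priceH {IL IH : ℝ} (θL θH θ : ℝ) (hη2 : η2 ≠ 0) (hIL : IL ≠ Ir1)
    (hIH : IH ≠ Ir1) :
    UW η2 η3 Ir1 Ir2 θ IL (priceL θL η2 η3 Ir1 Ir2 IL) -
        UW η2 η3 Ir1 Ir2 θ IH (priceH θL θH η2 η3 Ir1 Ir2 IL IH) =
      (θH - θ) * log ((IH - Ir1) / (IL - Ir1)) := by
  rw [UW_sub_UW η3 Ir2 θ _ _ hη2 hIL hIH, priceH]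
  ring

end Utility

lemma log_sub_div_sub_nonneg {a x y : ℝ} (hx : a < x) (hxy : x ≤ y) :
    0 ≤ log ((y - a) / (x - a)) :=
  log_nonneg ((one_le_div (sub_pos.2 hx)).2 (sub_le_sub_right hxy a))

section OptimalPerformance

variable {θL θH βL βH η1 η3 : ℝ} (Ir1 : ℝ)

lemma lt_ILstar (hβL : 0 < βL) (hη : η3 < η1) (hmono : βH * θH < θL) :
    Ir1 < ILstar θL θH βL βH η1 η3 Ir1 :=
  lt_add_of_pos_right Ir1 (div_pos (sub_pos.2 hmono) (mul_pos hβL (sub_pos.2 hη)))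

lemma ILstar_le_IHstar (hθ : θL ≤ θH) (hβL : 0 < βL) (hβ : βL + βH = 1) (hη : η3 < η1) :
    ILstar θL θH βL βH η1 η3 Ir1 ≤ IHstar θH η1 η3 Ir1 := by
  have : 0 < η1 - η3 := sub_pos.2 hη
  have hnum : θL - βH * θH ≤ βL * θH := by
    rwa [sub_le_iff_le_add, ← add_mul, hβ, one_mul]
  calc
    Ir1 + (θL - βH * θH) / (βL * (η1 - η3)) ≤ Ir1 + βL * θH / (βL * (η1 - η3)) := by gcongr
    _ = Ir1 + θH / (η1 - η3) := by rw [mul_div_mul_left _ _ hβL.ne']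

end OptimalPerformance

theorem stmt_9
    (θL θH βL βH η1 η2 η3 Ir1 Ir2 ΔC : ℝ)
    (hθL : 0 < θL) (hθ : θL < θH)
    (hβL0 : 0 < βL) (hβL1 : βL < 1)
    (hβH0 : 0 < βH) (hβH1 : βH < 1)
    (hβ : βL + βH = 1)
    (hη3 : 0 < η3) (hη13 : η3 < η1) (hη2 : 0 < η2)
    (hIr : Ir1 < Ir2)
    (hmono : βH * θH < θL) :
    UW η2 η3 Ir1 Ir2 θL (IHstar θH η1 η3 Ir1) (priceH θL θH η2 η3 Ir1 Ir2 (ILstar θL θH βL βH η1 η3 Ir1) (IHstar θH η1 η3 Ir1)) ≤ UW η2 η3 Ir1 Ir2 θL (ILstar θL θH βL βH η1 η3 Ir1) (priceL θL η2 η3 Ir1 Ir2 (ILstar θL θH βL βH η1 η3 Ir1)) ∧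
    UW η2 η3 Ir1 Ir2 θL (ILstar θL θH βL βH η1 η3 Ir1) (priceL θL η2 η3 Ir1 Ir2 (ILstar θL θH βL βH η1 η3 Ir1)) - UW η2 η3 Ir1 Ir2 θL (IHstar θH η1 η3 Ir1) (priceH θL θH η2 η3 Ir1 Ir2 (ILstar θL θH βL βH η1 η3 Ir1) (IHstar θH η1 η3 Ir1)) =
      (θH - θL) * Real.log (((IHstar θH η1 η3 Ir1) - Ir1) / ((ILstar θL θH βL βH η1 η3 Ir1) - Ir1)) ∧
    0 ≤ (θH - θL) * Real.log (((IHstar θH η1 η3 Ir1) - Ir1) / ((ILstar θL θH βL βH η1 η3 Ir1) - Ir1)) := by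
  have hIL : Ir1 < ILstar θL θH βL βH η1 η3 Ir1 := lt_ILstar Ir1 hβL0 hη13 hmono
  have hILH : ILstar θL θH βL βH η1 η3 Ir1 ≤ IHstar θH η1 η3 Ir1 :=
    ILstar_le_IHstar Ir1 hθ.le hβL0 hβ hη13
  have hgap := UW_priceL_sub_UW_priceH η3 Ir2 θL θH θL hη2.ne' hIL.ne' (hIL.trans_le hILH).ne'
  have hnonneg := mul_nonneg (sub_nonneg.2 hθ.le) (log_sub_div_sub_nonneg hIL hILH)
  exact ⟨sub_nonneg.1 (hnonneg.trans_eq hgap.symm), hgap, hnonneg⟩
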